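/- Let r > 0 and C₀ > 0. For each n let F_n be continuous on B̄_{2r}⁺ and H_n continuous on Γ̄_{2r} with sup_n ( sup_{B̄_{2r}⁺}|F_n| + sup_{Γ̄_{2r}}|H_n| ) ≤ C₀, and let v_n be a C² function on B̄_{2r}⁺ solving −Δv_n = F_n e^{2v_n} in B_{2r}⁺ and ∂v_n/∂ν = H_n e^{v_n} on Γ_{2r}. If the positive parts satisfy the uniform Sobolev bound sup_n ∫_{B_{2r}⁺} ( |∇v_n⁺|² + (v_n⁺)² ) dx ≤ C₀, then there exists a constant C, depending only on r and C₀, such that v_n ≤ C on B_{r/2}⁺ for all n. -/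

import Mathlib

open MeasureTheory Filter

noncomputable section

/-- Euclidean norm on `ℝ × ℝ`. -/
def nrm (p : ℝ × ℝ) : ℝ := Real.sqrt (p.1 ^ 2 + p.2 ^ 2)

/-- Euclidean Laplacian `Δw = ∂²w/∂s² + ∂²w/∂t²` of `w : ℝ × ℝ → ℝ`. -/
def lap (w : ℝ × ℝ → ℝ) (p : ℝ × ℝ) : ℝ :=
  deriv (fun s => deriv (fun s' => w (s', p.2)) s) p.1 +
    deriv (fun t => deriv (fun t' => w (p.1, t')) t) p.2

/-- The open upper half-ball `B_r⁺` of radius `r` centered at `0`. -/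
def ballPlus (r : ℝ) : Set (ℝ × ℝ) := {p | nrm p < r ∧ 0 < p.2}

/-- The closed upper half-ball `B̄_r⁺` of radius `r` centered at `0`. -/
def cballPlus (r : ℝ) : Set (ℝ × ℝ) := {p | nrm p ≤ r ∧ 0 ≤ p.2}

/-- Squared Euclidean gradient `|∇u|² = (∂u/∂s)² + (∂u/∂t)²`. -/
def gradSq (u : ℝ × ℝ → ℝ) (p : ℝ × ℝ) : ℝ :=
  (deriv (fun s => u (s, p.2)) p.1) ^ 2 + (deriv (fun t => u (p.1, t)) p.2) ^ 2

/-!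
Choose `x` maximising `e^{v(x)} (r - |x|)` over `B̄_r⁺`. A maximum at most `1` already bounds `v` on
`B_{r/2}⁺`. Otherwise `e^v ≤ 2 e^{v(x)}` on the square of half-side `l = e^{-v(x)} / 8` around `x`,
clipped to the half-plane, and at this scale the equation costs only `O(1)`: comparison with a
quadratic barrier gives `v(x) ≤ v(y) + O(1)` for some `y` on the sides of any such square of
half-side `a ≤ l`.

The energy bounds `v` on these sides. Young's inequality weighted by the distance to `x`, along a
ray of controlled energy, yields `v ≤ ½ log (1 / a) + O(1)` at one point, and for a suitable
`a ∈ [l / 2, l]` provided by Fubini the oscillation of `v` along the sides is `O(1)`. Hence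
`v(x) ≤ ½ v(x) + O(1)`.
-/

section Line

variable {E : Type*} [NormedAddCommGroup E] [NormedSpace ℝ E] {D : Set E} {u : E → ℝ} {p e : E}
  {a b : ℝ}

lemma continuousOn_norm_fderivWithin_line (hD : UniqueDiffOn ℝ D) (hu : ContDiffOn ℝ 1 u D)
    (hmem : ∀ t ∈ Set.Icc a b, p + t • e ∈ D) :
    ContinuousOn (fun t : ℝ => ‖fderivWithin ℝ u D (p + t • e)‖) (Set.Icc a b) :=
  (hu.continuousOn_fderivWithin hD le_rfl).norm.comp (by fun_prop) hmem

lemma abs_sub_le_integral_norm_fderivWithin_line (hD : UniqueDiffOn ℝ D)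
    (hu : ContDiffOn ℝ 1 u D) (he : ‖e‖ ≤ 1) (hmem : ∀ t ∈ Set.Icc a b, p + t • e ∈ D) {x y : ℝ}
    (hx : x ∈ Set.Icc a b) (hy : y ∈ Set.Icc a b) :
    |u (p + x • e) - u (p + y • e)| ≤ ∫ t in a..b, ‖fderivWithin ℝ u D (p + t • e)‖ := by
  wlog hxy : y ≤ x generalizing x y
  · rw [abs_sub_comm]
    exact this hy hx (le_of_not_ge hxy)
  have hsub : Set.Icc y x ⊆ Set.Icc a b := Set.Icc_subset_Icc hy.1 hx.2
  have hnorm := continuousOn_norm_fderivWithin_line hD hu hmem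
  have hderiv : ∀ t ∈ Set.Icc a b, HasDerivWithinAt (fun t : ℝ => u (p + t • e))
      (fderivWithin ℝ u D (p + t • e) e) (Set.Icc a b) t := fun t ht => by
    have hline : HasDerivWithinAt (fun t : ℝ => p + t • e) e (Set.Icc a b) t := by
      simpa using (((hasDerivAt_id t).smul_const e).const_add p).hasDerivWithinAt
    exact (hu.differentiableOn one_ne_zero _ (hmem t ht)).hasFDerivWithinAt.comp_hasDerivWithinAt
      t hline hmem
  have hcont : ContinuousOn (fun t : ℝ => fderivWithin ℝ u D (p + t • e) e) (Set.Icc a b) :=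
    ((hu.continuousOn_fderivWithin hD le_rfl).comp (by fun_prop) hmem).clm_apply continuousOn_const
  have hftc := intervalIntegral.integral_eq_sub_of_hasDerivAt_of_le hxy
    (fun t ht => (hderiv t (hsub ht)).continuousWithinAt.mono hsub)
    (fun t ht => (hderiv t (hsub (Set.Ioo_subset_Icc_self ht))).hasDerivAt
      (Icc_mem_nhds (hy.1.trans_lt ht.1) (ht.2.trans_le hx.2)))
    ((hcont.mono hsub).intervalIntegrable_of_Icc hxy)
  calc |u (p + x • e) - u (p + y • e)|
      = ‖∫ t in y..x, fderivWithin ℝ u D (p + t • e) e‖ := by rw [hftc, Real.norm_eq_abs]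
    _ ≤ ∫ t in y..x, ‖fderivWithin ℝ u D (p + t • e)‖ :=
        intervalIntegral.norm_integral_le_of_norm_le hxy
          (Eventually.of_forall fun _ _ => ContinuousLinearMap.unit_le_opNorm _ e he)
          ((hnorm.mono hsub).intervalIntegrable_of_Icc hxy)
    _ ≤ ∫ t in a..b, ‖fderivWithin ℝ u D (p + t • e)‖ :=
        intervalIntegral.integral_mono_interval hy.1 hxy hx.2
          (Eventually.of_forall fun _ => norm_nonneg _)
          (hnorm.intervalIntegrable_of_Icc (hx.1.trans hx.2))

lemma abs_le_integral_norm_fderivWithin_add_line (hD : UniqueDiffOn ℝ D)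
    (hu : ContDiffOn ℝ 1 u D) (he : ‖e‖ ≤ 1) (hmem : ∀ t ∈ Set.Icc a b, p + t • e ∈ D)
    (hab : a < b) :
    |u (p + a • e)| ≤
      ∫ t in a..b, (‖fderivWithin ℝ u D (p + t • e)‖ + 1 / (b - a) * |u (p + t • e)|) := by
  have hba : 0 < b - a := sub_pos.2 hab
  have hgrad := (continuousOn_norm_fderivWithin_line hD hu hmem).intervalIntegrable_of_Icc
    (μ := volume) hab.le
  have hval : IntervalIntegrable (fun t : ℝ => |u (p + t • e)|) volume a b :=
    (hu.continuousOn.comp (by fun_prop) hmem).abs.intervalIntegrable_of_Icc hab.le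
  set G := ∫ t in a..b, ‖fderivWithin ℝ u D (p + t • e)‖
  have hpoint : ∀ t ∈ Set.Icc a b, |u (p + a • e)| - G ≤ |u (p + t • e)| := fun t ht => by
    have := abs_sub_le_integral_norm_fderivWithin_line hD hu he hmem
      (Set.left_mem_Icc.2 hab.le) ht
    linarith [abs_sub_abs_le_abs_sub (u (p + a • e)) (u (p + t • e))]
  have hmean := intervalIntegral.integral_mono_on hab.le intervalIntegrable_const hval hpoint
  rw [intervalIntegral.integral_const, smul_eq_mul, ← le_div_iff₀' hba] at hmean
  rw [intervalIntegral.integral_add hgrad (hval.const_mul _), intervalIntegral.integral_const_mul,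
    one_div_mul_eq_div]
  linarith

/-- The square of the full first-order size `|Du| + κ|u|` of `u` on `D`. With the sup norm on
`ℝ × ℝ` the operator norm of the derivative is the `ℓ¹` norm of the gradient. -/
def energyDensity (κ : ℝ) (D : Set E) (u : E → ℝ) (p : E) : ℝ :=
  (‖fderivWithin ℝ u D p‖ + κ * |u p|) ^ 2

lemma energyDensity_nonneg (κ : ℝ) (D : Set E) (u : E → ℝ) (p : E) : 0 ≤ energyDensity κ D u p :=
  sq_nonneg _

lemma continuousOn_energyDensity (κ : ℝ) (hD : UniqueDiffOn ℝ D) (hu : ContDiffOn ℝ 1 u D) :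
    ContinuousOn (energyDensity κ D u) D :=
  ((hu.continuousOn_fderivWithin hD le_rfl).norm.add
    (continuousOn_const.mul hu.continuousOn.abs)).pow 2

lemma le_one_div_add_mul_sq {l : ℝ} (hl : 0 < l) (y : ℝ) : y ≤ 1 / (2 * l) + l / 2 * y ^ 2 := by
  have : 1 / (2 * l) + l / 2 * y ^ 2 - y = (l * y - 1) ^ 2 / (2 * l) := by field_simp; ring
  linarith [show 0 ≤ (l * y - 1) ^ 2 / (2 * l) by positivity]

lemma abs_sub_le_one_add_integral_energyDensity_line {κ l : ℝ} (hκ : 0 ≤ κ) (hl : 0 < l)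
    (hD : UniqueDiffOn ℝ D) (hu : ContDiffOn ℝ 1 u D) (he : ‖e‖ ≤ 1)
    (hmem : ∀ t ∈ Set.Icc a b, p + t • e ∈ D) (hba : b - a ≤ 2 * l) {x y : ℝ}
    (hx : x ∈ Set.Icc a b) (hy : y ∈ Set.Icc a b) :
    |u (p + x • e) - u (p + y • e)| ≤
      1 + l / 2 * ∫ t in a..b, energyDensity κ D u (p + t • e) := by
  have hab : a ≤ b := hx.1.trans hx.2
  have henergy : IntervalIntegrable (fun t : ℝ => energyDensity κ D u (p + t • e)) volume a b :=
    ((continuousOn_energyDensity κ hD hu).comp (by fun_prop) hmem).intervalIntegrable_of_Icc hab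
  have hpoint : ∀ q, ‖fderivWithin ℝ u D q‖ ≤ 1 / (2 * l) + l / 2 * energyDensity κ D u q :=
    fun q => (le_add_of_nonneg_right (by positivity)).trans (le_one_div_add_mul_sq hl _)
  calc |u (p + x • e) - u (p + y • e)|
      ≤ ∫ t in a..b, ‖fderivWithin ℝ u D (p + t • e)‖ :=
        abs_sub_le_integral_norm_fderivWithin_line hD hu he hmem hx hy
    _ ≤ ∫ t in a..b, (1 / (2 * l) + l / 2 * energyDensity κ D u (p + t • e)) :=
        intervalIntegral.integral_mono_on hab
          ((continuousOn_norm_fderivWithin_line hD hu hmem).intervalIntegrable_of_Icc hab)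
          (intervalIntegrable_const.add (henergy.const_mul _)) fun t _ => hpoint _
    _ = (b - a) / (2 * l) + l / 2 * ∫ t in a..b, energyDensity κ D u (p + t • e) := by
        rw [intervalIntegral.integral_add intervalIntegrable_const (henergy.const_mul _),
          intervalIntegral.integral_const, intervalIntegral.integral_const_mul, smul_eq_mul,
          mul_one_div]
    _ ≤ 1 + l / 2 * ∫ t in a..b, energyDensity κ D u (p + t • e) := by
        gcongr
        exact (div_le_one (by positivity)).2 hba

/-- Weighting Young's inequality by the distance `t` to the base point produces the coefficient
`1 / 2` of the logarithm on which the whole argument hinges. -/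
lemma abs_le_log_add_integral_energyDensity_line {κ : ℝ} (ha : 0 < a) (hab : a < b)
    (hκ : 1 / (b - a) ≤ κ) (hD : UniqueDiffOn ℝ D) (hu : ContDiffOn ℝ 1 u D) (he : ‖e‖ ≤ 1)
    (hmem : ∀ t ∈ Set.Icc a b, p + t • e ∈ D) :
    |u (p + a • e)| ≤
      (Real.log (b / a) + ∫ t in a..b, t * energyDensity κ D u (p + t • e)) / 2 := by
  have hpos : ∀ t ∈ Set.Icc a b, 0 < t := fun t ht => ha.trans_le ht.1
  have hval : ContinuousOn (fun t : ℝ => |u (p + t • e)|) (Set.Icc a b) :=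
    (hu.continuousOn.comp (by fun_prop) hmem).abs
  have henergy : IntervalIntegrable (fun t : ℝ => t * energyDensity κ D u (p + t • e)) volume a b :=
    (continuousOn_id.mul ((continuousOn_energyDensity κ hD hu).comp (by fun_prop)
      hmem)).intervalIntegrable_of_Icc hab.le
  have hinv : IntervalIntegrable (fun t : ℝ => 1 / t) volume a b :=
    (continuousOn_const.div continuousOn_id fun t ht =>
      (hpos t ht).ne').intervalIntegrable_of_Icc hab.le
  calc |u (p + a • e)|
      ≤ ∫ t in a..b, (‖fderivWithin ℝ u D (p + t • e)‖ + 1 / (b - a) * |u (p + t • e)|) :=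
        abs_le_integral_norm_fderivWithin_add_line hD hu he hmem hab
    _ ≤ ∫ t in a..b, (1 / t + t * energyDensity κ D u (p + t • e)) / 2 := by
        refine intervalIntegral.integral_mono_on hab.le
          (((continuousOn_norm_fderivWithin_line hD hu hmem).add
            (continuousOn_const.mul hval)).intervalIntegrable_of_Icc hab.le)
          ((hinv.add henergy).div_const 2) fun t ht => ?_
        calc ‖fderivWithin ℝ u D (p + t • e)‖ + 1 / (b - a) * |u (p + t • e)|
            ≤ ‖fderivWithin ℝ u D (p + t • e)‖ + κ * |u (p + t • e)| := by gcongr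
          _ ≤ _ := le_one_div_add_mul_sq (hpos t ht) _
          _ = (1 / t + t * energyDensity κ D u (p + t • e)) / 2 := by
              have := (hpos t ht).ne'
              rw [energyDensity]
              field_simp
    _ = (Real.log (b / a) + ∫ t in a..b, t * energyDensity κ D u (p + t • e)) / 2 := by
        rw [intervalIntegral.integral_div, intervalIntegral.integral_add hinv henergy,
          integral_one_div_of_pos ha (ha.trans hab)]

end Line

section Sections

variable {g : ℝ × ℝ → ℝ} {S T : Set ℝ} {a b : ℝ}

lemma intervalIntegral_le_integral_indicator {f : ℝ → ℝ} (hT : IsCompact T)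
    (hf : ContinuousOn f T) (hf0 : ∀ t, 0 ≤ f t) (hab : a ≤ b) (hsub : Set.Icc a b ⊆ T) :
    ∫ t in a..b, f t ≤ ∫ t, T.indicator f t := by
  rw [intervalIntegral.integral_of_le hab, integral_indicator hT.measurableSet]
  exact setIntegral_mono_set (hf.integrableOn_compact hT) (Eventually.of_forall hf0)
    (Set.Ioc_subset_Icc_self.trans hsub).eventuallyLE

lemma intervalIntegral_section_fst_le {s : ℝ} (hT : IsCompact T) (hg : ContinuousOn g (S ×ˢ T))
    (hg0 : ∀ p, 0 ≤ g p) (hs : s ∈ S) (hab : a ≤ b) (hsub : Set.Icc a b ⊆ T) :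
    ∫ t in a..b, g (s, t) ≤ ∫ t, (S ×ˢ T).indicator g (s, t) := by
  have hind : (fun t => (S ×ˢ T).indicator g (s, t)) = T.indicator fun t => g (s, t) := by
    ext t; by_cases ht : t ∈ T <;> simp [Set.indicator, hs, ht]
  rw [hind]
  exact intervalIntegral_le_integral_indicator hT (hg.comp (by fun_prop) fun t ht => ⟨hs, ht⟩)
    (fun _ => hg0 _) hab hsub

lemma intervalIntegral_section_snd_le {t : ℝ} (hS : IsCompact S) (hg : ContinuousOn g (S ×ˢ T))
    (hg0 : ∀ p, 0 ≤ g p) (ht : t ∈ T) (hab : a ≤ b) (hsub : Set.Icc a b ⊆ S) :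
    ∫ s in a..b, g (s, t) ≤ ∫ s, (S ×ˢ T).indicator g (s, t) := by
  have hind : (fun s => (S ×ˢ T).indicator g (s, t)) = S.indicator fun s => g (s, t) := by
    ext s; by_cases hs : s ∈ S <;> simp [Set.indicator, hs, ht]
  rw [hind]
  exact intervalIntegral_le_integral_indicator hS (hg.comp (by fun_prop) fun s hs => ⟨hs, ht⟩)
    (fun _ => hg0 _) hab hsub

lemma integrable_comp_add_left_add_comp_sub_left {φ : ℝ → ℝ} (hφ : Integrable φ) (c : ℝ) :
    Integrable fun a => φ (c + a) + φ (c - a) :=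
  (hφ.comp_add_left c).add (hφ.comp_sub_left c)

lemma integral_comp_add_left_add_comp_sub_left {φ : ℝ → ℝ} (hφ : Integrable φ) (c : ℝ) :
    ∫ a, (φ (c + a) + φ (c - a)) = 2 * ∫ s, φ s := by
  rw [integral_add (hφ.comp_add_left c) (hφ.comp_sub_left c), integral_add_left_eq_self φ,
    integral_sub_left_eq_self φ, two_mul]

lemma le_add_of_abs_sub_eq {φ : ℝ → ℝ} (hφ : ∀ s, 0 ≤ φ s) {s c : ℝ} (h : |s - c| = a) :
    φ s ≤ φ (c + a) + φ (c - a) := by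
  rcases abs_choice (s - c) with hs | hs <;> rw [← h, hs]
  · simpa using hφ (c - (s - c))
  · simpa using hφ (c + -(s - c))

lemma exists_mem_Icc_mul_le_integral {σ : ℝ → ℝ} (hσ : Integrable σ) (hσ0 : ∀ a, 0 ≤ σ a)
    (hab : a < b) : ∃ t ∈ Set.Icc a b, (b - a) * σ t ≤ ∫ s, σ s := by
  obtain ⟨t, ht, hle⟩ := exists_le_setAverage (by simp [hab]) (by simp)
    (hσ.integrableOn (s := Set.Icc a b))
  rw [setAverage_eq, Real.volume_real_Icc_of_le hab.le, smul_eq_mul, ← div_eq_inv_mul,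
    le_div_iff₀' (sub_pos.2 hab)] at hle
  exact ⟨t, ht, hle.trans (setIntegral_le_integral hσ (Eventually.of_forall hσ0))⟩

lemma exists_radius_forall_section_integral_le (hg : Integrable g) (hg0 : ∀ p, 0 ≤ g p)
    (x : ℝ × ℝ) {l : ℝ} (hl : 0 < l) :
    ∃ a ∈ Set.Icc (l / 2) l,
      (∀ s, |s - x.1| = a → l / 2 * ∫ t, g (s, t) ≤ 4 * ∫ p, g p) ∧
      (∀ t, |t - x.2| = a → l / 2 * ∫ s, g (s, t) ≤ 4 * ∫ p, g p) := by
  set φ : ℝ → ℝ := fun s => ∫ t, g (s, t)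
  set ψ : ℝ → ℝ := fun t => ∫ s, g (s, t)
  have hφ : Integrable φ := hg.integral_prod_left
  have hψ : Integrable ψ := hg.integral_prod_right
  have hφ0 : ∀ s, 0 ≤ φ s := fun s => integral_nonneg fun _ => hg0 _
  have hψ0 : ∀ t, 0 ≤ ψ t := fun t => integral_nonneg fun _ => hg0 _
  have hφ' : ∫ s, φ s = ∫ p, g p := (integral_prod g hg).symm
  have hψ' : ∫ t, ψ t = ∫ p, g p := (integral_prod_symm g hg).symm
  have hφ_fold := integrable_comp_add_left_add_comp_sub_left hφ x.1
  have hψ_fold := integrable_comp_add_left_add_comp_sub_left hψ x.2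
  have hφ_fold0 : ∀ a, 0 ≤ φ (x.1 + a) + φ (x.1 - a) := fun a => add_nonneg (hφ0 _) (hφ0 _)
  have hψ_fold0 : ∀ a, 0 ≤ ψ (x.2 + a) + ψ (x.2 - a) := fun a => add_nonneg (hψ0 _) (hψ0 _)
  obtain ⟨a, ha, hle⟩ := exists_mem_Icc_mul_le_integral (hφ_fold.add hψ_fold)
    (fun a => add_nonneg (hφ_fold0 a) (hψ_fold0 a)) (half_lt_self hl)
  rw [integral_add' hφ_fold hψ_fold, integral_comp_add_left_add_comp_sub_left hφ,
    integral_comp_add_left_add_comp_sub_left hψ, hφ', hψ', sub_half] at hle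
  have hbound : ∀ c ≤ (φ (x.1 + a) + φ (x.1 - a)) + (ψ (x.2 + a) + ψ (x.2 - a)),
      l / 2 * c ≤ 4 * ∫ p, g p := fun c hc =>
    (mul_le_mul_of_nonneg_left hc (by positivity)).trans (hle.trans_eq (by ring))
  exact ⟨a, ha, fun s hs => hbound _ ((le_add_of_abs_sub_eq hφ0 hs).trans
      (le_add_of_nonneg_right (hψ_fold0 a))),
    fun t ht => hbound _ ((le_add_of_abs_sub_eq hψ0 ht).trans
      (le_add_of_nonneg_left (hφ_fold0 a)))⟩

lemma integral_cone_section_le {x : ℝ × ℝ} {α : ℝ} (hT : IsCompact T)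
    (hg : ContinuousOn g (S ×ˢ T)) (hg0 : ∀ p, 0 ≤ g p) (hα : 0 ≤ α) (hs : x.1 + α ∈ S)
    (ht : Set.Icc x.2 (x.2 + α) ⊆ T) :
    ∫ τ in Set.Icc 0 1, α * g (x.1 + α, x.2 + α * τ) ≤
      ∫ t, (S ×ˢ T).indicator g (x.1 + α, t) := by
  rw [integral_Icc_eq_integral_Ioc, ← intervalIntegral.integral_of_le zero_le_one,
    intervalIntegral.integral_const_mul,
    intervalIntegral.mul_integral_comp_add_mul (f := fun t => g (x.1 + α, t)), mul_zero, add_zero,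
    mul_one]
  exact intervalIntegral_section_fst_le hT hg hg0 hs (by linarith) ht

lemma exists_slope_integral_le (hS : IsCompact S) (hT : IsCompact T)
    (hg : ContinuousOn g (S ×ˢ T)) (hg0 : ∀ p, 0 ≤ g p) {x : ℝ × ℝ} (ha : 0 ≤ a) (hab : a ≤ b)
    (hs : ∀ α ∈ Set.Icc a b, x.1 + α ∈ S) (ht : Set.Icc x.2 (x.2 + b) ⊆ T) :
    ∃ τ ∈ Set.Icc (0 : ℝ) 1,
      ∫ α in a..b, α * g (x.1 + α, x.2 + α * τ) ≤ ∫ p in S ×ˢ T, g p := by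
  set h : ℝ → ℝ → ℝ := fun τ α => α * g (x.1 + α, x.2 + α * τ)
  have hmem : ∀ q ∈ Set.Icc (0 : ℝ) 1 ×ˢ Set.Icc a b, (x.1 + q.2, x.2 + q.2 * q.1) ∈ S ×ˢ T := by
    rintro ⟨τ, α⟩ ⟨hτ, hα⟩
    have hα0 : 0 ≤ α := ha.trans hα.1
    refine ⟨hs α hα, ht ⟨le_add_of_nonneg_right (mul_nonneg hα0 hτ.1), ?_⟩⟩
    change x.2 + α * τ ≤ x.2 + b
    linarith [mul_le_of_le_one_right hα0 hτ.2, hα.2]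
  have hcone : Integrable (Function.uncurry h)
      ((volume.restrict (Set.Icc 0 1)).prod (volume.restrict (Set.Icc a b))) := by
    rw [Measure.prod_restrict]
    exact (continuousOn_snd.mul (hg.comp (by fun_prop) hmem)).integrableOn_compact
      (isCompact_Icc.prod isCompact_Icc)
  have hG : Integrable ((S ×ˢ T).indicator g) :=
    (hg.integrableOn_compact (hS.prod hT)).integrable_indicator (hS.prod hT).measurableSet
  have hG0 : ∀ p, 0 ≤ (S ×ˢ T).indicator g p := Set.indicator_nonneg fun _ _ => hg0 _
  have hsection : Integrable fun α => ∫ t, (S ×ˢ T).indicator g (x.1 + α, t) :=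
    hG.integral_prod_left.comp_add_left x.1
  obtain ⟨τ, hτ, hle⟩ := exists_le_setAverage (by simp) (by simp) hcone.integral_prod_left
  refine ⟨τ, hτ, ?_⟩
  rw [intervalIntegral.integral_of_le hab, ← integral_Icc_eq_integral_Ioc]
  calc ∫ α in Set.Icc a b, h τ α
      ≤ ∫ τ in Set.Icc 0 1, ∫ α in Set.Icc a b, h τ α := by simpa [setAverage_eq] using hle
    _ = ∫ α in Set.Icc a b, ∫ τ in Set.Icc 0 1, h τ α := integral_integral_swap hcone
    _ ≤ ∫ α in Set.Icc a b, ∫ t, (S ×ˢ T).indicator g (x.1 + α, t) :=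
        setIntegral_mono_on hcone.integral_prod_right hsection.integrableOn measurableSet_Icc
          fun α hα => integral_cone_section_le hT hg hg0 (ha.trans hα.1) (hs α hα)
            ((Set.Icc_subset_Icc_right (by linarith [hα.2])).trans ht)
    _ ≤ ∫ α, ∫ t, (S ×ˢ T).indicator g (x.1 + α, t) :=
        setIntegral_le_integral hsection
          (Eventually.of_forall fun _ => integral_nonneg fun _ => hG0 _)
    _ = ∫ p in S ×ˢ T, g p := by
        rw [integral_add_left_eq_self fun s => ∫ t, (S ×ˢ T).indicator g (s, t),
          ← integral_prod _ hG, ← Measure.volume_eq_prod,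
          integral_indicator (hS.prod hT).measurableSet]

end Sections

section ClippedSquare

/-- The part in the closed upper half-plane of the closed square of center `x` and half-side `a`. -/
def clippedSquare (x : ℝ × ℝ) (a : ℝ) : Set (ℝ × ℝ) :=
  Set.Icc (x.1 - a) (x.1 + a) ×ˢ Set.Icc (max 0 (x.2 - a)) (x.2 + a)

/-- The sides of the square of center `x` and half-side `a`, clipped to the closed upper
half-plane. The piece of the boundary of `clippedSquare x a` on the line `{t = 0}` is left out,
unless it lies on the bottom side of the square. -/
def clippedSquareSides (x : ℝ × ℝ) (a : ℝ) : Set (ℝ × ℝ) :=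
  {y ∈ clippedSquare x a | |y.1 - x.1| = a ∨ |y.2 - x.2| = a}

variable {x y z : ℝ × ℝ} {a l R : ℝ}

lemma mem_clippedSquare :
    y ∈ clippedSquare x a ↔ |y.1 - x.1| ≤ a ∧ |y.2 - x.2| ≤ a ∧ 0 ≤ y.2 := by
  simp only [clippedSquare, Set.mem_prod, Set.mem_Icc, max_le_iff, abs_le]
  constructor
  · rintro ⟨⟨h1, h2⟩, ⟨h3, h4⟩, h5⟩
    exact ⟨⟨by linarith, by linarith⟩, ⟨by linarith, by linarith⟩, h3⟩
  · rintro ⟨⟨h1, h2⟩, ⟨h3, h4⟩, h5⟩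
    exact ⟨⟨by linarith, by linarith⟩, ⟨h5, by linarith⟩, by linarith⟩

lemma isCompact_clippedSquare (x : ℝ × ℝ) (a : ℝ) : IsCompact (clippedSquare x a) :=
  isCompact_Icc.prod isCompact_Icc

lemma clippedSquare_subset_clippedSquare (h : a ≤ R) : clippedSquare x a ⊆ clippedSquare x R :=
  fun _ hy => by
    rw [mem_clippedSquare] at hy ⊢
    exact ⟨hy.1.trans h, hy.2.1.trans h, hy.2.2⟩

section Oscillation

variable {κ : ℝ} {D : Set (ℝ × ℝ)} {u : ℝ × ℝ → ℝ}

lemma abs_sub_le_of_fst_eq (hκ : 0 ≤ κ) (hl : 0 < l) (hD : UniqueDiffOn ℝ D)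
    (hu : ContDiffOn ℝ 1 u D) (hR : clippedSquare x R ⊆ D) (hal : a ≤ l) (haR : a ≤ R)
    (hy : y ∈ clippedSquare x a) (hz : z ∈ clippedSquare x a) (hyz : z.1 = y.1) :
    |u y - u z| ≤
      1 + l / 2 * ∫ t, (clippedSquare x R).indicator (energyDensity κ D u) (y.1, t) := by
  have hline : ∀ t, (y.1, (0 : ℝ)) + t • ((0 : ℝ), (1 : ℝ)) = (y.1, t) := fun t => by simp
  have hsub := clippedSquare_subset_clippedSquare (x := x) haR
  have hmem : ∀ t ∈ Set.Icc (max 0 (x.2 - a)) (x.2 + a),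
      (y.1, (0 : ℝ)) + t • ((0 : ℝ), (1 : ℝ)) ∈ D := fun t ht => by
    rw [hline]; exact hR (hsub ⟨hy.1, ht⟩)
  have hosc := abs_sub_le_one_add_integral_energyDensity_line hκ hl hD hu (by simp) hmem
    (by linarith [le_max_right 0 (x.2 - a)]) hy.2 hz.2
  simp only [hline] at hosc
  rw [show z = (y.1, z.2) from Prod.ext hyz rfl]
  refine hosc.trans ?_
  gcongr
  exact intervalIntegral_section_fst_le isCompact_Icc
    ((continuousOn_energyDensity κ hD hu).mono hR) (energyDensity_nonneg κ D u) (hsub hy).1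
    (hy.2.1.trans hy.2.2) (Set.Icc_subset_Icc (max_le_max_left 0 (by linarith)) (by linarith))

lemma abs_sub_le_of_snd_eq (hκ : 0 ≤ κ) (hl : 0 < l) (hD : UniqueDiffOn ℝ D)
    (hu : ContDiffOn ℝ 1 u D) (hR : clippedSquare x R ⊆ D) (hal : a ≤ l) (haR : a ≤ R)
    (hy : y ∈ clippedSquare x a) (hz : z ∈ clippedSquare x a) (hyz : z.2 = y.2) :
    |u y - u z| ≤
      1 + l / 2 * ∫ s, (clippedSquare x R).indicator (energyDensity κ D u) (s, y.2) := by
  have hline : ∀ s, ((0 : ℝ), y.2) + s • ((1 : ℝ), (0 : ℝ)) = (s, y.2) := fun s => by simp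
  have hsub := clippedSquare_subset_clippedSquare (x := x) haR
  have hmem : ∀ s ∈ Set.Icc (x.1 - a) (x.1 + a),
      ((0 : ℝ), y.2) + s • ((1 : ℝ), (0 : ℝ)) ∈ D := fun s hs => by
    rw [hline]; exact hR (hsub ⟨hs, hy.2⟩)
  have hosc := abs_sub_le_one_add_integral_energyDensity_line hκ hl hD hu (by simp) hmem
    (by linarith) hy.1 hz.1
  simp only [hline] at hosc
  rw [show z = (z.1, y.2) from Prod.ext rfl hyz]
  refine hosc.trans ?_
  gcongr
  exact intervalIntegral_section_snd_le isCompact_Icc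
    ((continuousOn_energyDensity κ hD hu).mono hR) (energyDensity_nonneg κ D u) (hsub hy).2
    (hy.1.1.trans hy.1.2) (Set.Icc_subset_Icc (by linarith) (by linarith))

end Oscillation

lemma sub_le_three_mul_of_mem_clippedSquareSides {u : ℝ × ℝ → ℝ} {δ : ℝ} (ha : 0 ≤ a)
    (hx : 0 ≤ x.2) (hδ : 0 ≤ δ)
    (hvert : ∀ y ∈ clippedSquare x a, ∀ z ∈ clippedSquare x a, z.1 = y.1 → |y.1 - x.1| = a →
      u y - u z ≤ δ)
    (hhor : ∀ y ∈ clippedSquare x a, ∀ z ∈ clippedSquare x a, z.2 = y.2 → |y.2 - x.2| = a →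
      u y - u z ≤ δ)
    (hy : y ∈ clippedSquareSides x a) (hz : z ∈ clippedSquare x a) (hz1 : z.1 = x.1 + a) :
    u y - u z ≤ 3 * δ := by
  have hright : x.1 + a ∈ Set.Icc (x.1 - a) (x.1 + a) := ⟨by linarith, le_rfl⟩
  have htop : x.2 + a ∈ Set.Icc (max 0 (x.2 - a)) (x.2 + a) :=
    ⟨max_le (by linarith) (by linarith), le_rfl⟩
  have habs : |x.1 + a - x.1| = a := by rw [add_sub_cancel_left, abs_of_nonneg ha]
  have hcross : ∀ w ∈ clippedSquare x a, |w.2 - x.2| = a → u w - u z ≤ 2 * δ := fun w hw hw2 => by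
    have h1 := hhor w hw (x.1 + a, w.2) ⟨hright, hw.2⟩ rfl hw2
    have h2 := hvert (x.1 + a, w.2) ⟨hright, hw.2⟩ z hz hz1 habs
    linarith
  rcases hy with ⟨hy, hy1 | hy2⟩
  · have h1 := hvert y hy (y.1, x.2 + a) ⟨hy.1, htop⟩ rfl hy1
    have h2 := hcross (y.1, x.2 + a) ⟨hy.1, htop⟩ (by simp [abs_of_nonneg ha])
    linarith
  · linarith [hcross y hy hy2]

section SideEstimate

variable {κ : ℝ} {D : Set (ℝ × ℝ)} {u : ℝ × ℝ → ℝ}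

lemma exists_right_side_abs_le (ha : 0 < a) (haR : a < R) (hκ : 1 / (R - a) ≤ κ)
    (hD : UniqueDiffOn ℝ D) (hu : ContDiffOn ℝ 1 u D) (hR : clippedSquare x R ⊆ D)
    (hx : 0 ≤ x.2) :
    ∃ z ∈ clippedSquare x a, z.1 = x.1 + a ∧
      |u z| ≤ (Real.log (R / a) + ∫ p in clippedSquare x R, energyDensity κ D u p) / 2 := by
  obtain ⟨τ, hτ, hcone⟩ := exists_slope_integral_le (x := x) isCompact_Icc isCompact_Icc
    ((continuousOn_energyDensity κ hD hu).mono hR) (energyDensity_nonneg κ D u) ha.le haR.le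
    (fun α hα => ⟨by linarith [hα.1], by linarith [hα.2]⟩)
    (Set.Icc_subset_Icc_left (max_le hx (by linarith)))
  have hline : ∀ α : ℝ, x + α • ((1 : ℝ), τ) = (x.1 + α, x.2 + α * τ) := fun α => by
    ext <;> simp
  have hmem : ∀ α, 0 ≤ α → x + α • ((1 : ℝ), τ) ∈ clippedSquare x α := fun α hα => by
    have hατ := mul_nonneg hα hτ.1
    simp only [hline, mem_clippedSquare, add_sub_cancel_left, abs_of_nonneg hα, abs_of_nonneg hατ]
    exact ⟨le_rfl, mul_le_of_le_one_right hα hτ.2, by linarith⟩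
  refine ⟨x + a • ((1 : ℝ), τ), hmem a ha.le, by simp, ?_⟩
  have hlog := abs_le_log_add_integral_energyDensity_line (p := x) (e := ((1 : ℝ), τ)) ha haR hκ hD
    hu (by simp [Prod.norm_def, abs_of_nonneg hτ.1, hτ.2]) fun α hα =>
      hR (clippedSquare_subset_clippedSquare hα.2 (hmem α (ha.le.trans hα.1)))
  refine hlog.trans ?_
  simp only [hline]
  gcongr
  exact hcone

lemma exists_forall_mem_clippedSquareSides_le (hl : 0 < l) (hlR : l ≤ R / 2) (hκ : 2 / R ≤ κ)
    (hD : UniqueDiffOn ℝ D) (hu : ContDiffOn ℝ 1 u D) (hR : clippedSquare x R ⊆ D)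
    (hx : 0 ≤ x.2) :
    ∃ a ∈ Set.Icc (l / 2) l, ∀ y ∈ clippedSquareSides x a,
      u y ≤ Real.log (R / a) / 2 + 3 +
        25 / 2 * ∫ p in clippedSquare x R, energyDensity κ D u p := by
  have hR0 : 0 < R := by linarith
  have hκ0 : 0 ≤ κ := le_trans (by positivity) hκ
  set B := ∫ p in clippedSquare x R, energyDensity κ D u p
  have hB : 0 ≤ B := integral_nonneg (energyDensity_nonneg κ D u)
  have hcompact := isCompact_clippedSquare x R
  obtain ⟨a, ha, hfst, hsnd⟩ := exists_radius_forall_section_integral_le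
    ((((continuousOn_energyDensity κ hD hu).mono hR).integrableOn_compact
      hcompact).integrable_indicator hcompact.measurableSet)
    (Set.indicator_nonneg fun p _ => energyDensity_nonneg κ D u p) x hl
  rw [integral_indicator hcompact.measurableSet] at hfst hsnd
  have ha0 : 0 < a := by linarith [ha.1]
  have haR : a < R := by linarith [ha.2]
  have hRa : 1 / (R - a) ≤ κ := by
    refine le_trans ?_ hκ
    rw [div_le_div_iff₀ (by linarith) hR0]
    linarith [ha.2]
  obtain ⟨z, hz, hz1, huz⟩ := exists_right_side_abs_le ha0 haR hRa hD hu hR hx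
  refine ⟨a, ha, fun y hy => ?_⟩
  have hhop := sub_le_three_mul_of_mem_clippedSquareSides (δ := 1 + 4 * B) ha0.le hx
    (by positivity)
    (fun y hy z hz hyz hy1 => (le_abs_self _).trans <|
      (abs_sub_le_of_fst_eq hκ0 hl hD hu hR ha.2 haR.le hy hz hyz).trans (by grw [hfst _ hy1]))
    (fun y hy z hz hyz hy2 => (le_abs_self _).trans <|
      (abs_sub_le_of_snd_eq hκ0 hl hD hu hR ha.2 haR.le hy hz hyz).trans (by grw [hsnd _ hy2]))
    hy hz hz1
  linarith [le_abs_self (u z)]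

end SideEstimate

end ClippedSquare

section MaximumPrinciple

lemma deriv_deriv_nonpos_of_isLocalMax {f : ℝ → ℝ} {x : ℝ} (hf : ContinuousAt f x)
    (hmax : IsLocalMax f x) : deriv (deriv f) x ≤ 0 := by
  by_contra! hpos
  have hmin : IsLocalMin f x := isLocalMin_of_deriv_deriv_pos hpos hmax.deriv_eq_zero hf
  have hconst : f =ᶠ[nhds x] fun _ => f x := by
    filter_upwards [hmin, hmax] with y h1 h2 using le_antisymm h2 h1
  simp [hconst.deriv.deriv_eq] at hpos

lemma deriv_deriv_add {f g : ℝ → ℝ} {x : ℝ} (hf : ContDiffAt ℝ 2 f x) (hg : ContDiffAt ℝ 2 g x) :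
    deriv (deriv (f + g)) x = deriv (deriv f) x + deriv (deriv g) x := by
  have hderiv : deriv (f + g) =ᶠ[nhds x] deriv f + deriv g := by
    filter_upwards [hf.eventually (by simp), hg.eventually (by simp)] with y hfy hgy
    exact deriv_add (hfy.differentiableAt two_ne_zero) (hgy.differentiableAt two_ne_zero)
  rw [hderiv.deriv_eq]
  exact deriv_add
    ((hf.derivWithin (m := 1) (by norm_num)).differentiableAt one_ne_zero)
    ((hg.derivWithin (m := 1) (by norm_num)).differentiableAt one_ne_zero)

lemma derivWithin_Ici_nonpos_of_isLocalMaxOn {f : ℝ → ℝ} {x : ℝ}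
    (hmax : IsLocalMaxOn f (Set.Ici x) x) : derivWithin f (Set.Ici x) x ≤ 0 := by
  rw [← fderivWithin_derivWithin]
  refine hmax.fderivWithin_nonpos (mem_posTangentConeAt_of_segment_subset ?_)
  rw [segment_eq_Icc (by simp)]
  exact Set.Icc_subset_Ici_self

variable {v w : ℝ × ℝ → ℝ} {p : ℝ × ℝ}

lemma lap_nonpos_of_isLocalMax (hw : ContinuousAt w p) (hmax : IsLocalMax w p) : lap w p ≤ 0 :=
  add_nonpos
    (deriv_deriv_nonpos_of_isLocalMax (f := fun s => w (s, p.2))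
      (ContinuousAt.comp (g := w) hw (by fun_prop))
      (IsLocalMax.comp_continuous (g := fun s => (s, p.2)) hmax (by fun_prop)))
    (deriv_deriv_nonpos_of_isLocalMax (f := fun t => w (p.1, t))
      (ContinuousAt.comp (g := w) hw (by fun_prop))
      (IsLocalMax.comp_continuous (g := fun t => (p.1, t)) hmax (by fun_prop)))

lemma lap_add (hv : ContDiffAt ℝ 2 v p) (hw : ContDiffAt ℝ 2 w p) :
    lap (v + w) p = lap v p + lap w p := by
  have hfst := deriv_deriv_add (f := fun s => v (s, p.2)) (g := fun s => w (s, p.2)) (x := p.1)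
    (ContDiffAt.comp p.1 (g := v) hv (by fun_prop)) (ContDiffAt.comp p.1 (g := w) hw (by fun_prop))
  have hsnd := deriv_deriv_add (f := fun t => v (p.1, t)) (g := fun t => w (p.1, t)) (x := p.2)
    (ContDiffAt.comp p.2 (g := v) hv (by fun_prop)) (ContDiffAt.comp p.2 (g := w) hw (by fun_prop))
  exact (congrArg₂ (· + ·) hfst hsnd).trans (add_add_add_comm ..)

/-- Comparison function for the mixed problem: its Laplacian is `4c` and the linear term tilts it
upwards across the line `{t = 0}`. -/
def barrier (x : ℝ × ℝ) (c k : ℝ) (p : ℝ × ℝ) : ℝ :=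
  c * (p.1 - x.1) ^ 2 + c * (p.2 - x.2) ^ 2 + k * (p.2 - x.2)

variable {x : ℝ × ℝ} {a c k : ℝ}

lemma contDiff_barrier : ContDiff ℝ 2 (barrier x c k) := by
  unfold barrier; fun_prop

lemma hasDerivAt_barrier_snd (s t : ℝ) :
    HasDerivAt (fun t => barrier x c k (s, t)) (2 * c * (t - x.2) + k) t := by
  have hsub := (hasDerivAt_id' t).sub_const x.2
  exact ((((hsub.fun_pow 2).const_mul c).const_add (c * (s - x.1) ^ 2)).add
    (hsub.const_mul k)).congr_deriv (by norm_num; ring)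

lemma hasDerivAt_barrier_fst (s t : ℝ) :
    HasDerivAt (fun s => barrier x c k (s, t)) (2 * c * (s - x.1)) s := by
  have hsub := (hasDerivAt_id' s).sub_const x.1
  exact ((((hsub.fun_pow 2).const_mul c).add_const (c * (t - x.2) ^ 2)).add_const
    (k * (t - x.2))).congr_deriv (by norm_num; ring)

lemma lap_barrier : lap (barrier x c k) p = 4 * c := by
  have hfst : HasDerivAt (fun s => 2 * c * (s - x.1)) (2 * c) p.1 := by
    simpa using ((hasDerivAt_id' p.1).sub_const x.1).const_mul (2 * c)
  have hsnd : HasDerivAt (fun t => 2 * c * (t - x.2) + k) (2 * c) p.2 := by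
    simpa using (((hasDerivAt_id' p.2).sub_const x.2).const_mul (2 * c)).add_const k
  simp only [lap, (hasDerivAt_barrier_fst _ _).deriv, (hasDerivAt_barrier_snd _ _).deriv,
    hfst.deriv, hsnd.deriv]
  ring

lemma barrier_self : barrier x c k x = 0 := by simp [barrier]

lemma barrier_le (hc : 0 ≤ c) (hk : 0 ≤ k) (hp : p ∈ clippedSquare x a) :
    barrier x c k p ≤ 2 * c * a ^ 2 + k * a := by
  obtain ⟨h1, h2, -⟩ := mem_clippedSquare.1 hp
  have h1' := mul_le_mul_of_nonneg_left (sq_le_sq.2 (h1.trans (le_abs_self a))) hc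
  have h2' := mul_le_mul_of_nonneg_left (sq_le_sq.2 (h2.trans (le_abs_self a))) hc
  have h2'' := mul_le_mul_of_nonneg_left ((le_abs_self _).trans h2) hk
  unfold barrier
  linarith

lemma clippedSquare_mem_nhds (h1 : |p.1 - x.1| < a) (h2 : |p.2 - x.2| < a) (hp : 0 < p.2) :
    clippedSquare x a ∈ nhds p := by
  rw [abs_lt] at h1 h2
  exact prod_mem_nhds (Icc_mem_nhds (by linarith) (by linarith))
    (Icc_mem_nhds (max_lt hp (by linarith)) (by linarith))

lemma not_isMaxOn_clippedSquare_of_pos (hv : ContDiffAt ℝ 2 v p) (hlap : -(4 * c) < lap v p)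
    (h1 : |p.1 - x.1| < a) (h2 : |p.2 - x.2| < a) (hp : 0 < p.2) :
    ¬ IsMaxOn (v + barrier x c k) (clippedSquare x a) p := fun hmax => by
  have hle := lap_nonpos_of_isLocalMax (w := v + barrier x c k)
    (hv.add contDiff_barrier.contDiffAt).continuousAt
    (hmax.isLocalMax (clippedSquare_mem_nhds h1 h2 hp))
  rw [lap_add hv contDiff_barrier.contDiffAt, lap_barrier] at hle
  linarith

lemma not_isMaxOn_clippedSquare_of_eq_zero (hp : p ∈ clippedSquare x a) (hp0 : p.2 = 0)
    (hdiff : DifferentiableWithinAt ℝ (fun t => v (p.1, t)) (Set.Ici 0) 0)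
    (hderiv : 2 * c * x.2 - k < derivWithin (fun t => v (p.1, t)) (Set.Ici 0) 0)
    (h2 : |p.2 - x.2| < a) : ¬ IsMaxOn (v + barrier x c k) (clippedSquare x a) p := fun hmax => by
  have hmax0 : IsLocalMaxOn (fun t => v (p.1, t) + barrier x c k (p.1, t)) (Set.Ici 0) 0 := by
    have hnear : ∀ᶠ t in nhdsWithin 0 (Set.Ici 0), t ≤ x.2 + a := by
      rw [hp0, abs_lt] at h2
      exact nhdsWithin_le_nhds (Iic_mem_nhds (by linarith))
    filter_upwards [hnear, self_mem_nhdsWithin] with t ht ht0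
    have := hmax (⟨hp.1, hp.2.1.trans (hp0.le.trans ht0), ht⟩ : (p.1, t) ∈ clippedSquare x a)
    simpa [← hp0] using this
  have hle := derivWithin_Ici_nonpos_of_isLocalMaxOn hmax0
  have hb := (hasDerivAt_barrier_snd (x := x) (c := c) (k := k) p.1 0).hasDerivWithinAt
    (s := Set.Ici 0)
  rw [(hdiff.hasDerivWithinAt.fun_add hb).derivWithin
    (uniqueDiffOn_Ici 0 0 Set.self_mem_Ici)] at hle
  linarith

lemma exists_mem_clippedSquareSides_le_add (ha : 0 ≤ a) (hx : 0 ≤ x.2) (hc : 0 ≤ c) (hk : 0 ≤ k)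
    (hcont : ContinuousOn v (clippedSquare x a))
    (hv : ∀ p ∈ clippedSquare x a, 0 < p.2 → ContDiffAt ℝ 2 v p)
    (hlap : ∀ p ∈ clippedSquare x a, 0 < p.2 → -(4 * c) < lap v p)
    (hdiff : ∀ s, (s, 0) ∈ clippedSquare x a →
      DifferentiableWithinAt ℝ (fun t => v (s, t)) (Set.Ici 0) 0)
    (hderiv : ∀ s, (s, 0) ∈ clippedSquare x a →
      2 * c * x.2 - k < derivWithin (fun t => v (s, t)) (Set.Ici 0) 0) :
    ∃ y ∈ clippedSquareSides x a, v x ≤ v y + (2 * c * a ^ 2 + k * a) := by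
  have hmem : x ∈ clippedSquare x a := mem_clippedSquare.2 (by simp [ha, hx])
  obtain ⟨y, hy, hmax⟩ := (isCompact_clippedSquare x a).exists_isMaxOn ⟨x, hmem⟩
    (hcont.add (contDiff_barrier (c := c) (k := k)).continuous.continuousOn)
  obtain ⟨h1, h2, h0⟩ := mem_clippedSquare.1 hy
  refine ⟨y, ⟨hy, ?_⟩, ?_⟩
  · by_contra! hside
    have h1' := h1.lt_of_ne hside.1
    have h2' := h2.lt_of_ne hside.2
    rcases h0.eq_or_lt' with h0 | h0
    · have hy0 : (y.1, 0) ∈ clippedSquare x a := by rwa [← h0]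
      exact not_isMaxOn_clippedSquare_of_eq_zero hy h0 (hdiff _ hy0) (hderiv _ hy0) h2' hmax
    · exact not_isMaxOn_clippedSquare_of_pos (hv y hy h0) (hlap y hy h0) h1' h2' h0 hmax
  · have hle : v x + barrier x c k x ≤ v y + barrier x c k y := hmax hmem
    rw [barrier_self] at hle
    linarith [barrier_le hc hk hy]

end MaximumPrinciple

section HalfBall

variable {r a : ℝ} {p x : ℝ × ℝ}

lemma nrm_eq_norm (p : ℝ × ℝ) : nrm p = ‖Complex.equivRealProdCLM.symm p‖ := by
  simp [nrm, Complex.norm_def, Complex.normSq_apply, sq]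

lemma nrm_nonneg (p : ℝ × ℝ) : 0 ≤ nrm p := Real.sqrt_nonneg _

lemma continuous_nrm : Continuous nrm := by
  unfold nrm; fun_prop

lemma abs_fst_le_nrm (p : ℝ × ℝ) : |p.1| ≤ nrm p :=
  Real.abs_le_sqrt (le_add_of_nonneg_right (sq_nonneg _))

lemma abs_snd_le_nrm (p : ℝ × ℝ) : |p.2| ≤ nrm p :=
  Real.abs_le_sqrt (le_add_of_nonneg_left (sq_nonneg _))

lemma nrm_le_nrm_add (p x : ℝ × ℝ) : nrm p ≤ nrm x + |p.1 - x.1| + |p.2 - x.2| := by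
  rw [nrm_eq_norm, nrm_eq_norm, add_assoc, ← sub_add_cancel p x, map_add, add_comm]
  refine (norm_add_le _ _).trans ?_
  gcongr
  simpa using Complex.norm_le_abs_re_add_abs_im (Complex.equivRealProdCLM.symm (p - x))

lemma isOpen_ballPlus (r : ℝ) : IsOpen (ballPlus r) :=
  (isOpen_lt continuous_nrm continuous_const).inter (isOpen_lt continuous_const continuous_snd)

lemma ballPlus_subset_cballPlus (r : ℝ) : ballPlus r ⊆ cballPlus r :=
  fun _ hp => ⟨hp.1.le, hp.2.le⟩

lemma cballPlus_mem_nhds (hp : p ∈ ballPlus r) : cballPlus r ∈ nhds p :=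
  mem_of_superset ((isOpen_ballPlus r).mem_nhds hp) (ballPlus_subset_cballPlus r)

lemma isCompact_cballPlus (r : ℝ) : IsCompact (cballPlus r) :=
  (isCompact_Icc.prod isCompact_Icc).of_isClosed_subset
    ((isClosed_le continuous_nrm continuous_const).inter
      (isClosed_le continuous_const continuous_snd))
    fun p hp => ⟨abs_le.1 ((abs_fst_le_nrm p).trans hp.1), abs_le.1 ((abs_snd_le_nrm p).trans hp.1)⟩

lemma convex_cballPlus (r : ℝ) : Convex ℝ (cballPlus r) := by
  have hball := (convex_closedBall (0 : ℂ) r).linear_preimage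
    Complex.equivRealProdCLM.symm.toLinearEquiv.toLinearMap
  have hhalf := (convex_Ici (0 : ℝ)).linear_preimage (LinearMap.snd ℝ ℝ ℝ)
  have heq : cballPlus r = Complex.equivRealProdCLM.symm.toLinearEquiv.toLinearMap ⁻¹'
      Metric.closedBall 0 r ∩ LinearMap.snd ℝ ℝ ℝ ⁻¹' Set.Ici 0 := by
    ext p
    simp [cballPlus, nrm_eq_norm]
  exact heq ▸ hball.inter hhalf

lemma uniqueDiffOn_cballPlus (hr : 0 < r) : UniqueDiffOn ℝ (cballPlus r) := by
  refine uniqueDiffOn_convex (convex_cballPlus r)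
    ⟨(0, r / 2), mem_interior_iff_mem_nhds.2 (cballPlus_mem_nhds ⟨?_, half_pos hr⟩)⟩
  simpa [nrm, Real.sqrt_sq (half_pos hr).le] using hr

lemma nrm_le_of_mem_clippedSquare (hp : p ∈ clippedSquare x a) : nrm p ≤ nrm x + 2 * a := by
  obtain ⟨h1, h2, -⟩ := mem_clippedSquare.1 hp
  linarith [nrm_le_nrm_add p x]

lemma clippedSquare_subset_cballPlus (h : nrm x + 2 * a ≤ r) : clippedSquare x a ⊆ cballPlus r :=
  fun _ hp => ⟨(nrm_le_of_mem_clippedSquare hp).trans h, (mem_clippedSquare.1 hp).2.2⟩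

lemma clippedSquare_ae_le_ballPlus (h : nrm x + 2 * a < r) :
    clippedSquare x a ≤ᵐ[volume] ballPlus r := by
  have hline : ∀ᵐ p : ℝ × ℝ, p.2 ≠ 0 :=
    Measure.quasiMeasurePreserving_snd.ae (Measure.ae_ne volume (0 : ℝ))
  filter_upwards [hline] with p hp0 hp
  exact ⟨(nrm_le_of_mem_clippedSquare hp).trans_lt h, (mem_clippedSquare.1 hp).2.2.lt_of_ne' hp0⟩

lemma differentiableWithinAt_snd_of_contDiffOn_cballPlus {v : ℝ × ℝ → ℝ} {s : ℝ}
    (hv : ContDiffOn ℝ 1 v (cballPlus r)) (hs : nrm (s, 0) < r) :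
    DifferentiableWithinAt ℝ (fun t => v (s, t)) (Set.Ici 0) 0 := by
  have hpre : DifferentiableWithinAt ℝ (fun t => v (s, t)) ((fun t => (s, t)) ⁻¹' cballPlus r) 0 :=
    DifferentiableWithinAt.comp (g := v) 0 (hv.differentiableOn one_ne_zero (s, 0) ⟨hs.le, le_rfl⟩)
      (by fun_prop) (Set.mapsTo_preimage _ _)
  refine hpre.mono_of_mem_nhdsWithin ?_
  have hnear : ∀ᶠ t in nhds (0 : ℝ), nrm (s, t) < r :=
    (continuous_nrm.comp (by fun_prop : Continuous fun t : ℝ => (s, t))).continuousAt.eventually_lt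
      continuousAt_const hs
  filter_upwards [nhdsWithin_le_nhds hnear, self_mem_nhdsWithin] with t ht ht0 using ⟨ht.le, ht0⟩

end HalfBall

section SmoothPosPart

/-- A continuously differentiable substitute for the positive part `x⁺`, namely `√(1 + (x⁺)²) - 1`;
it differs from `x⁺` by at most `1`. -/
def smoothPosPart (x : ℝ) : ℝ := √(1 + max x 0 ^ 2) - 1

lemma hasDerivAt_max_zero_sq (x : ℝ) : HasDerivAt (fun x : ℝ => max x 0 ^ 2) (2 * max x 0) x := by
  have hright : ∀ y ∈ Set.Ici (0 : ℝ), max y 0 ^ 2 = y ^ 2 := fun y hy => by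
    rw [max_eq_left (Set.mem_Ici.1 hy)]
  have hleft : ∀ y ∈ Set.Iic (0 : ℝ), max y 0 ^ 2 = 0 := fun y hy => by
    rw [max_eq_right (Set.mem_Iic.1 hy), zero_pow two_ne_zero]
  have hright' : ∀ y ∈ Set.Ici (0 : ℝ),
      HasDerivWithinAt (fun x : ℝ => max x 0 ^ 2) (2 * max y 0) (Set.Ici 0) y := fun y hy => by
    have hsq : HasDerivAt (fun x : ℝ => x ^ 2) (2 * max y 0) y := by
      simpa [max_eq_left (Set.mem_Ici.1 hy)] using hasDerivAt_pow 2 y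
    exact hsq.hasDerivWithinAt.congr hright (hright y hy)
  have hleft' : ∀ y ∈ Set.Iic (0 : ℝ),
      HasDerivWithinAt (fun x : ℝ => max x 0 ^ 2) (2 * max y 0) (Set.Iic 0) y := fun y hy => by
    have hzero : HasDerivAt (fun _ : ℝ => (0 : ℝ)) (2 * max y 0) y := by
      simpa [max_eq_right (Set.mem_Iic.1 hy)] using hasDerivAt_const y (0 : ℝ)
    exact hzero.hasDerivWithinAt.congr hleft (hleft y hy)
  rcases lt_trichotomy x 0 with hx | rfl | hx
  · exact (hleft' x hx.le).hasDerivAt (Iic_mem_nhds hx)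
  · simpa [Set.Iic_union_Ici] using (hleft' 0 Set.self_mem_Iic).union (hright' 0 Set.self_mem_Ici)
  · exact (hright' x hx.le).hasDerivAt (Ici_mem_nhds hx)

lemma hasDerivAt_smoothPosPart (x : ℝ) :
    HasDerivAt smoothPosPart (max x 0 / √(1 + max x 0 ^ 2)) x := by
  have hsqrt := ((hasDerivAt_max_zero_sq x).const_add 1).sqrt (by positivity)
  exact (hsqrt.sub_const 1).congr_deriv (by field_simp)

lemma contDiff_smoothPosPart : ContDiff ℝ 1 smoothPosPart := by
  refine contDiff_one_iff_deriv.2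
    ⟨fun x => (hasDerivAt_smoothPosPart x).differentiableAt, ?_⟩
  rw [funext fun x => (hasDerivAt_smoothPosPart x).deriv]
  exact (by fun_prop : Continuous fun x : ℝ => max x 0).div (by fun_prop) fun x => by positivity

lemma abs_deriv_smoothPosPart_le_one (x : ℝ) : |deriv smoothPosPart x| ≤ 1 := by
  rw [(hasDerivAt_smoothPosPart x).deriv,
    abs_of_nonneg (div_nonneg (le_max_right x 0) (Real.sqrt_nonneg _))]
  exact div_le_one_of_le₀ (Real.le_sqrt_of_sq_le (by linarith)) (Real.sqrt_nonneg _)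

lemma sub_one_le_smoothPosPart (x : ℝ) : x - 1 ≤ smoothPosPart x :=
  sub_le_sub_right ((le_max_left x 0).trans (Real.le_sqrt_of_sq_le (by linarith))) 1

lemma smoothPosPart_nonneg (x : ℝ) : 0 ≤ smoothPosPart x :=
  sub_nonneg.2 (Real.one_le_sqrt.2 (le_add_of_nonneg_right (sq_nonneg _)))

lemma smoothPosPart_le_max_zero (x : ℝ) : smoothPosPart x ≤ max x 0 := by
  have hx : 0 ≤ max x 0 := le_max_right x 0
  exact sub_le_iff_le_add.2 ((Real.sqrt_le_left (by positivity)).2 (by nlinarith))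

end SmoothPosPart

section PosPartEnergy

variable {v w : ℝ × ℝ → ℝ} {p : ℝ × ℝ} {κ : ℝ}

/-- The Sobolev energy density `|∇v⁺|² + (v⁺)²` of the positive part of `v`. -/
def posPartEnergy (v : ℝ × ℝ → ℝ) (p : ℝ × ℝ) : ℝ :=
  gradSq (fun q => max (v q) 0) p + max (v p) 0 ^ 2

lemma gradSq_eq_of_hasFDerivAt {L : ℝ × ℝ →L[ℝ] ℝ} (h : HasFDerivAt v L p) :
    gradSq v p = L (1, 0) ^ 2 + L (0, 1) ^ 2 := by
  have hfst := HasFDerivAt.comp_hasDerivAt (l := v) (f := fun s => (s, p.2)) p.1 h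
    ((hasDerivAt_id p.1).prodMk (hasDerivAt_const p.1 p.2))
  have hsnd := HasFDerivAt.comp_hasDerivAt (l := v) (f := fun t => (p.1, t)) p.2 h
    ((hasDerivAt_const p.2 p.1).prodMk (hasDerivAt_id p.2))
  rw [gradSq]
  exact congrArg₂ (fun a b : ℝ => a ^ 2 + b ^ 2) hfst.deriv hsnd.deriv

lemma opNorm_sq_le (L : ℝ × ℝ →L[ℝ] ℝ) : ‖L‖ ^ 2 ≤ 2 * (L (1, 0) ^ 2 + L (0, 1) ^ 2) := by
  have hbound : ‖L‖ ≤ |L (1, 0)| + |L (0, 1)| := by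
    refine L.opNorm_le_bound (by positivity) fun q => ?_
    have hq : L q = q.1 * L (1, 0) + q.2 * L (0, 1) := by
      rw [← smul_eq_mul, ← smul_eq_mul, ← map_smul, ← map_smul, ← map_add]
      simp
    rw [hq, add_mul]
    refine (norm_add_le _ _).trans ?_
    rw [norm_mul, norm_mul, mul_comm ‖q.1‖, mul_comm ‖q.2‖]
    exact add_le_add (mul_le_mul_of_nonneg_left (norm_fst_le q) (norm_nonneg _))
      (mul_le_mul_of_nonneg_left (norm_snd_le q) (norm_nonneg _))
  calc ‖L‖ ^ 2 ≤ (|L (1, 0)| + |L (0, 1)|) ^ 2 := by gcongr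
    _ ≤ 2 * (|L (1, 0)| ^ 2 + |L (0, 1)| ^ 2) := add_sq_le
    _ = 2 * (L (1, 0) ^ 2 + L (0, 1) ^ 2) := by rw [sq_abs, sq_abs]

lemma posPartEnergy_of_pos (hv : DifferentiableAt ℝ v p) (hp : 0 < v p) :
    posPartEnergy v p = fderiv ℝ v p (1, 0) ^ 2 + fderiv ℝ v p (0, 1) ^ 2 + v p ^ 2 := by
  have heq : (fun q => max (v q) 0) =ᶠ[nhds p] v := by
    filter_upwards [hv.continuousAt.eventually (lt_mem_nhds hp)] with q hq using max_eq_left hq.le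
  rw [posPartEnergy, gradSq_eq_of_hasFDerivAt (hv.hasFDerivAt.congr_of_eventuallyEq heq),
    max_eq_left hp.le]

lemma posPartEnergy_of_nonpos (hp : v p ≤ 0) : posPartEnergy v p = 0 := by
  have hfst : IsLocalMin (fun s => max (v (s, p.2)) 0) p.1 :=
    Eventually.of_forall fun s => by simp [hp]
  have hsnd : IsLocalMin (fun t => max (v (p.1, t)) 0) p.2 :=
    Eventually.of_forall fun t => by simp [hp]
  simp [posPartEnergy, gradSq, hfst.deriv_eq_zero, hsnd.deriv_eq_zero, hp]

lemma energyDensity_smoothPosPart_comp_le {D : Set (ℝ × ℝ)} (hκ : 0 ≤ κ) (hD : D ∈ nhds p)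
    (hv : DifferentiableAt ℝ v p) :
    energyDensity κ D (smoothPosPart ∘ v) p ≤ (4 + 2 * κ ^ 2) * posPartEnergy v p := by
  have hφ := hasDerivAt_smoothPosPart (v p)
  have hfderiv : fderivWithin ℝ (smoothPosPart ∘ v) D p =
      deriv smoothPosPart (v p) • fderiv ℝ v p := by
    rw [fderivWithin_of_mem_nhds hD, hφ.deriv, (hφ.comp_hasFDerivAt p hv.hasFDerivAt).fderiv]
  have hval : |smoothPosPart (v p)| ≤ max (v p) 0 :=
    (abs_of_nonneg (smoothPosPart_nonneg _)).trans_le (smoothPosPart_le_max_zero _)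
  rw [energyDensity, hfderiv, norm_smul, Real.norm_eq_abs, Function.comp_apply]
  rcases le_or_gt (v p) 0 with hp | hp
  · rw [posPartEnergy_of_nonpos hp, hφ.deriv]
    rw [max_eq_right hp] at hval ⊢
    simp [le_antisymm hval (abs_nonneg _)]
  · rw [max_eq_left hp.le] at hval
    set L := fderiv ℝ v p
    calc (|deriv smoothPosPart (v p)| * ‖L‖ + κ * |smoothPosPart (v p)|) ^ 2
        ≤ (1 * ‖L‖ + κ * v p) ^ 2 := by gcongr; exact abs_deriv_smoothPosPart_le_one _
      _ ≤ 2 * (‖L‖ ^ 2 + κ ^ 2 * v p ^ 2) := by rw [one_mul, ← mul_pow]; exact add_sq_le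
      _ ≤ 2 * (2 * (L (1, 0) ^ 2 + L (0, 1) ^ 2) + κ ^ 2 * v p ^ 2) := by
          gcongr; exact opNorm_sq_le L
      _ ≤ (4 + 2 * κ ^ 2) * (L (1, 0) ^ 2 + L (0, 1) ^ 2 + v p ^ 2) := by
          linarith [show 0 ≤ κ ^ 2 * (L (1, 0) ^ 2 + L (0, 1) ^ 2) by positivity, sq_nonneg (v p)]
      _ = (4 + 2 * κ ^ 2) * posPartEnergy v p := by rw [posPartEnergy_of_pos hv hp]

variable {D U G : Set (ℝ × ℝ)}

/-- Without integrability the energy bound would be void, the Bochner integral of a non-integrable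
function being `0`. -/
lemma integrableOn_posPartEnergy (hD : IsCompact D) (hD' : UniqueDiffOn ℝ D) (hU : IsOpen U)
    (hUD : U ⊆ D) (hv : ContDiffOn ℝ 1 v D) : IntegrableOn (posPartEnergy v) U := by
  set h : ℝ × ℝ → ℝ := fun p =>
    fderivWithin ℝ v D p (1, 0) ^ 2 + fderivWithin ℝ v D p (0, 1) ^ 2 + v p ^ 2
  have hderiv := hv.continuousOn_fderivWithin hD' le_rfl
  have hh : ContinuousOn h D :=
    (((hderiv.clm_apply continuousOn_const).pow 2).add
      ((hderiv.clm_apply continuousOn_const).pow 2)).add (hv.continuousOn.pow 2)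
  have hpos : IsOpen (U ∩ v ⁻¹' Set.Ioi 0) :=
    (hv.continuousOn.mono hUD).isOpen_inter_preimage hU isOpen_Ioi
  refine IntegrableOn.congr_fun (((hh.integrableOn_compact hD).mono_set hUD).indicator
    hpos.measurableSet) (fun p hp => ?_) hU.measurableSet
  by_cases hvp : 0 < v p
  · have hnhds : D ∈ nhds p := mem_of_superset (hU.mem_nhds hp) hUD
    rw [Set.indicator_of_mem (show p ∈ U ∩ v ⁻¹' Set.Ioi 0 from ⟨hp, hvp⟩), posPartEnergy_of_pos
      ((hv.differentiableOn one_ne_zero p (hUD hp)).differentiableAt hnhds) hvp]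
    simp only [h, fderivWithin_of_mem_nhds hnhds]
  · rw [Set.indicator_of_notMem fun hmem => hvp hmem.2, posPartEnergy_of_nonpos (not_lt.1 hvp)]

lemma setIntegral_energyDensity_smoothPosPart_comp_le (hκ : 0 ≤ κ) (hD : IsCompact D)
    (hD' : UniqueDiffOn ℝ D) (hU : IsOpen U) (hUD : U ⊆ D) (hv : ContDiffOn ℝ 1 v D)
    (hGU : G ≤ᵐ[volume] U) :
    ∫ p in G, energyDensity κ D (smoothPosPart ∘ v) p ≤
      (4 + 2 * κ ^ 2) * ∫ p in U, posPartEnergy v p := by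
  have hint : IntegrableOn (energyDensity κ D (smoothPosPart ∘ v)) U :=
    ((continuousOn_energyDensity κ hD'
      (contDiff_smoothPosPart.comp_contDiffOn hv)).integrableOn_compact hD).mono_set hUD
  rw [← integral_const_mul]
  refine (setIntegral_mono_set hint (Eventually.of_forall (energyDensity_nonneg κ D _)) hGU).trans
    (setIntegral_mono_on hint ((integrableOn_posPartEnergy hD hD' hU hUD hv).const_mul _)
      hU.measurableSet fun p hp => ?_)
  have hnhds : D ∈ nhds p := mem_of_superset (hU.mem_nhds hp) hUD
  exact energyDensity_smoothPosPart_comp_le hκ hnhds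
    ((hv.differentiableOn one_ne_zero p (hUD hp)).differentiableAt hnhds)

end PosPartEnergy

section Liouville

variable {K B M r ρ a : ℝ} {v : ℝ × ℝ → ℝ} {x : ℝ × ℝ}

/-- `v` is a subsolution on `B̄_ρ⁺` of the Liouville problem with constant coefficients `K`:
`-Δv ≤ K e^{2v}` inside and `∂v/∂ν ≤ K e^v` on the straight boundary portion. The normal
derivative is taken from inside the half-ball. -/
structure IsLiouvilleSubsolution (K ρ : ℝ) (v : ℝ × ℝ → ℝ) : Prop where
  contDiffOn : ContDiffOn ℝ 2 v (cballPlus ρ)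
  neg_lap_le : ∀ p ∈ ballPlus ρ, -lap v p ≤ K * Real.exp (2 * v p)
  neg_derivWithin_le : ∀ s : ℝ, |s| < ρ →
    -derivWithin (fun t => v (s, t)) (Set.Ici 0) 0 ≤ K * Real.exp (v (s, 0))

lemma isLiouvilleSubsolution_of_abs_le {F : ℝ × ℝ → ℝ} {H : ℝ → ℝ}
    (hF : ∀ p ∈ ballPlus ρ, |F p| ≤ K) (hH : ∀ s : ℝ, |s| < ρ → |H s| ≤ K)
    (hv : ContDiffOn ℝ 2 v (cballPlus ρ))
    (hlap : ∀ p ∈ ballPlus ρ, -lap v p = F p * Real.exp (2 * v p))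
    (hderiv : ∀ s : ℝ, |s| < ρ →
      -derivWithin (fun t => v (s, t)) (Set.Ici 0) 0 = H s * Real.exp (v (s, 0))) :
    IsLiouvilleSubsolution K ρ v where
  contDiffOn := hv
  neg_lap_le p hp := (hlap p hp).trans_le <|
    mul_le_mul_of_nonneg_right (le_of_abs_le (hF p hp)) (Real.exp_pos _).le
  neg_derivWithin_le s hs := (hderiv s hs).trans_le <|
    mul_le_mul_of_nonneg_right (le_of_abs_le (hH s hs)) (Real.exp_pos _).le

lemma IsLiouvilleSubsolution.exists_mem_clippedSquareSides_le
    (hv : IsLiouvilleSubsolution K ρ v) (hK : 0 < K) (hM : 0 < M) (ha : 0 ≤ a)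
    (hMa : M * a ≤ 1 / 4) (hx : 0 ≤ x.2) (hxa : nrm x + 2 * a < ρ)
    (hexp : ∀ q ∈ clippedSquare x a, Real.exp (v q) ≤ M) :
    ∃ y ∈ clippedSquareSides x a, v x ≤ v y + K / 2 := by
  have hnrm : ∀ p ∈ clippedSquare x a, nrm p < ρ := fun p hp =>
    (nrm_le_of_mem_clippedSquare hp).trans_lt hxa
  have hlap : ∀ p ∈ clippedSquare x a, 0 < p.2 → -(4 * (K * M ^ 2 / 2)) < lap v p := by
    intro p hp hp0
    have hsq : Real.exp (2 * v p) ≤ M ^ 2 := by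
      rw [two_mul, Real.exp_add, ← sq]
      exact pow_le_pow_left₀ (Real.exp_pos _).le (hexp p hp) 2
    linarith [hv.neg_lap_le p ⟨hnrm p hp, hp0⟩, mul_le_mul_of_nonneg_left hsq hK.le,
      show 0 < K * M ^ 2 by positivity]
  have hderiv : ∀ s, (s, 0) ∈ clippedSquare x a → 2 * (K * M ^ 2 / 2) * x.2 - 3 / 2 * K * M <
      derivWithin (fun t => v (s, t)) (Set.Ici 0) 0 := by
    intro s hs
    have hxa' : x.2 ≤ a := by simpa [abs_of_nonneg hx] using (mem_clippedSquare.1 hs).2.1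
    have hMx : K * M * (M * x.2) ≤ K * M * (1 / 4) := by
      gcongr
      exact (mul_le_mul_of_nonneg_left hxa' hM.le).trans hMa
    linarith [hv.neg_derivWithin_le s ((abs_fst_le_nrm (s, 0)).trans_lt (hnrm _ hs)),
      mul_le_mul_of_nonneg_left (hexp _ hs) hK.le, mul_pos hK hM]
  obtain ⟨y, hy, hle⟩ := exists_mem_clippedSquareSides_le_add (v := v) ha hx
    (by positivity) (by positivity)
    (hv.contDiffOn.continuousOn.mono (clippedSquare_subset_cballPlus hxa.le))
    (fun p hp hp0 => hv.contDiffOn.contDiffAt (cballPlus_mem_nhds ⟨hnrm p hp, hp0⟩)) hlap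
    (fun s hs => differentiableWithinAt_snd_of_contDiffOn_cballPlus
      (hv.contDiffOn.of_le one_le_two) (hnrm _ hs)) hderiv
  have hMa2 : (M * a) ^ 2 ≤ (1 / 4) ^ 2 := by gcongr
  refine ⟨y, hy, hle.trans ?_⟩
  linarith [mul_le_mul_of_nonneg_left hMa2 hK.le, mul_le_mul_of_nonneg_left hMa hK.le]

lemma IsLiouvilleSubsolution.le_of_forall_exp_le (hv : IsLiouvilleSubsolution K (2 * r) v)
    (hK : 0 < K) (hr : 0 < r) (hB : ∫ p in ballPlus (2 * r), posPartEnergy v p ≤ B)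
    (hx : x ∈ cballPlus r) (hscale : 1 / (8 * Real.exp (v x)) ≤ r / 8)
    (hexp : ∀ q ∈ clippedSquare x (1 / (8 * Real.exp (v x))),
      Real.exp (v q) ≤ 2 * Real.exp (v x)) :
    v x ≤ Real.log (4 * r) + 8 + K + 25 * ((4 + 2 * (8 / r) ^ 2) * B) := by
  set l := 1 / (8 * Real.exp (v x)) with hl
  have hl0 : 0 < l := by positivity
  have hnrm : nrm x ≤ r := hx.1
  have hball : nrm x + 2 * (r / 4) < 2 * r := by linarith
  have hD := uniqueDiffOn_cballPlus (r := 2 * r) (by positivity)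
  have hv1 : ContDiffOn ℝ 1 v (cballPlus (2 * r)) := hv.contDiffOn.of_le one_le_two
  obtain ⟨a, ⟨hla, hal⟩, hsides⟩ := exists_forall_mem_clippedSquareSides_le (κ := 8 / r) hl0
    (by linarith : l ≤ r / 4 / 2) (by field_simp; norm_num) hD
    (contDiff_smoothPosPart.comp_contDiffOn hv1) (clippedSquare_subset_cballPlus hball.le) hx.2
  have ha0 : 0 < a := by linarith
  have hMl : 2 * Real.exp (v x) * l = 1 / 4 := by rw [hl]; field_simp; norm_num
  obtain ⟨y, hy, hxy⟩ := hv.exists_mem_clippedSquareSides_le (M := 2 * Real.exp (v x)) hK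
    (by positivity) ha0.le ((mul_le_mul_of_nonneg_left hal (by positivity)).trans_eq hMl) hx.2
    (by linarith) fun q hq => hexp q (clippedSquare_subset_clippedSquare hal hq)
  have henergy := (setIntegral_energyDensity_smoothPosPart_comp_le (κ := 8 / r) (by positivity)
    (isCompact_cballPlus _) hD (isOpen_ballPlus _) (ballPlus_subset_cballPlus _) hv1
    (clippedSquare_ae_le_ballPlus hball)).trans (mul_le_mul_of_nonneg_left hB (by positivity))
  have hratio : r / 4 / a ≤ 4 * r * Real.exp (v x) := by
    rw [div_le_iff₀ ha0]
    linarith [mul_le_mul_of_nonneg_left hla (show 0 ≤ 4 * r * Real.exp (v x) by positivity),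
      show 4 * r * Real.exp (v x) * (l / 2) = r / 4 by rw [hl]; field_simp; norm_num]
  have hlog := Real.log_le_log (by positivity) hratio
  rw [Real.log_mul (by positivity) (Real.exp_ne_zero _), Real.log_exp] at hlog
  have hu := (sub_one_le_smoothPosPart (v y)).trans (hsides y hy)
  linarith

lemma exists_isMaxOn_exp_mul_sub_nrm (hr : 0 ≤ r) (hv : ContinuousOn v (cballPlus r)) :
    ∃ x ∈ cballPlus r, IsMaxOn (fun q => Real.exp (v q) * (r - nrm q)) (cballPlus r) x :=
  (isCompact_cballPlus r).exists_isMaxOn ⟨0, by simp [cballPlus, nrm, hr]⟩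
    (hv.rexp.mul (continuousOn_const.sub continuous_nrm.continuousOn))

lemma exp_le_two_mul_exp_of_isMaxOn {q : ℝ × ℝ}
    (hmax : IsMaxOn (fun q => Real.exp (v q) * (r - nrm q)) (cballPlus r) x)
    (hx : nrm x < r) (ha : a ≤ (r - nrm x) / 4) (hq : q ∈ clippedSquare x a) :
    Real.exp (v q) ≤ 2 * Real.exp (v x) := by
  have hle : Real.exp (v q) * (r - nrm q) ≤ Real.exp (v x) * (r - nrm x) :=
    hmax (clippedSquare_subset_cballPlus (by linarith) hq)
  have hhalf : (r - nrm x) / 2 ≤ r - nrm q := by linarith [nrm_le_of_mem_clippedSquare hq]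
  refine le_of_mul_le_mul_right ?_ (half_pos (sub_pos.2 hx))
  linarith [mul_le_mul_of_nonneg_left hhalf (Real.exp_pos (v q)).le]

theorem uniform_upper_bound_general (r K B : ℝ) (hr : 0 < r) (hK : 0 < K) :
    ∃ C : ℝ, ∀ v, IsLiouvilleSubsolution K (2 * r) v →
      ∫ p in ballPlus (2 * r), posPartEnergy v p ≤ B → ∀ p ∈ ballPlus (r / 2), v p ≤ C := by
  refine ⟨max (Real.log (2 / r))
    (Real.log 2 + (Real.log (4 * r) + 8 + K + 25 * ((4 + 2 * (8 / r) ^ 2) * B))),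
    fun v hv hB p hp => ?_⟩
  have hsub : cballPlus r ⊆ cballPlus (2 * r) := fun q hq => ⟨hq.1.trans (by linarith), hq.2⟩
  obtain ⟨x, hx, hmax⟩ := exists_isMaxOn_exp_mul_sub_nrm hr.le
    (hv.contDiffOn.continuousOn.mono hsub)
  have hp1 : nrm p < r / 2 := hp.1
  have hle : Real.exp (v p) * (r / 2) ≤ Real.exp (v x) * (r - nrm x) :=
    (mul_le_mul_of_nonneg_left (by linarith) (Real.exp_pos _).le).trans
      (hmax (⟨by linarith, hp.2.le⟩ : p ∈ cballPlus r))
  rcases le_or_gt (Real.exp (v x) * (r - nrm x)) 1 with hsmall | hlarge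
  · refine le_max_of_le_left ((Real.le_log_iff_exp_le (by positivity)).2 ?_)
    rw [le_div_iff₀ hr]
    linarith
  · refine le_max_of_le_right ?_
    have hd : nrm x < r := sub_pos.1
      (pos_of_mul_pos_right (one_pos.trans hlarge) (Real.exp_pos _).le)
    have hscale : 1 / (8 * Real.exp (v x)) ≤ (r - nrm x) / 8 := by
      rw [div_le_div_iff₀ (by positivity) (by positivity)]
      linarith
    have hvx := hv.le_of_forall_exp_le hK hr hB hx
      (hscale.trans (by linarith [nrm_nonneg x]))
      fun q hq => exp_le_two_mul_exp_of_isMaxOn hmax hd (hscale.trans (by linarith)) hq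
    have hpx : v p ≤ Real.log 2 + v x := by
      rw [← Real.exp_le_exp, Real.exp_add, Real.exp_log two_pos]
      refine le_of_mul_le_mul_right (hle.trans ?_) (half_pos hr)
      linarith [mul_nonneg (Real.exp_pos (v x)).le (nrm_nonneg x)]
    linarith

end Liouville

/-- **Uniform upper bound from a uniform Sobolev bound on the positive parts**
(cf. Lemma 4.2(c)): if `−Δv_n = F_n e^{2v_n}` in `B_{2r}⁺`, `∂v_n/∂ν = H_n e^{v_n}` on
`Γ_{2r}`, with `|F_n| ≤ C₀`, `|H_n| ≤ C₀` and `∫_{B_{2r}⁺}(|∇v_n⁺|² + (v_n⁺)²) ≤ C₀`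
uniformly in `n`, then `v_n ≤ C(r, C₀)` on `B_{r/2}⁺` for all `n`. -/
theorem uniform_upper_bound (r C₀ : ℝ) (hr : 0 < r) (hC₀ : 0 < C₀) :
    ∃ C : ℝ, ∀ (F : ℕ → ℝ × ℝ → ℝ) (H : ℕ → ℝ → ℝ) (v : ℕ → ℝ × ℝ → ℝ),
      (∀ n, ContinuousOn (F n) (cballPlus (2 * r))) →
      (∀ n, ContinuousOn (H n) (Set.Icc (-(2 * r)) (2 * r))) →
      (∀ n, ∀ p ∈ cballPlus (2 * r), |F n p| ≤ C₀) →
      (∀ n, ∀ s ∈ Set.Icc (-(2 * r)) (2 * r), |H n s| ≤ C₀) →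
      (∀ n, ContDiffOn ℝ 2 (v n) (cballPlus (2 * r))) →
      (∀ n, ∀ p ∈ ballPlus (2 * r), -lap (v n) p = F n p * Real.exp (2 * v n p)) →
      (∀ n, ∀ s : ℝ, |s| < 2 * r →
        -derivWithin (fun t => v n (s, t)) (Set.Ici 0) 0 = H n s * Real.exp (v n (s, 0))) →
      (∀ n, (∫ p in ballPlus (2 * r),
        (gradSq (fun q => max (v n q) 0) p + max (v n p) 0 ^ 2)) ≤ C₀) →
      ∀ n, ∀ p ∈ ballPlus (r / 2), v n p ≤ C := by
  obtain ⟨C, hC⟩ := uniform_upper_bound_general r C₀ C₀ hr hC₀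
  exact ⟨C, fun F H v _ _ hF hH hv hlap hderiv henergy n => hC (v n)
    (isLiouvilleSubsolution_of_abs_le (fun p hp => hF n p (ballPlus_subset_cballPlus _ hp))
      (fun s hs => hH n s (abs_le.1 hs.le)) (hv n) (hlap n) (hderiv n)) (henergy n)⟩
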